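/- arXiv:2202.09387 — 5 statements merged into one kernel-verified Lean document; each statement's English description precedes it below -/
import Mathlib

section
/- Let σ be a permutation of {1,…,m}, let X ⊆ {1,…,m} be nonempty, let P = m − |X| + 1, and let y : X → ℝ be nonnegative. Suppose that for every j ∈ X and every p ∈ {1,…,P}, y(j) ≤ 1 − Σ_{j' ∈ X, j' ≠ j} 1[σ(j') = p] + Σ_{p'=1}^{p−1} 1[σ(j) = p']. Then y(j) = 0 for every j ∈ X with σ(j) > min_{j' ∈ X} σ(j'). That is, the linking constraints eliminate every available dispatch action except the one with the most preferred priority rank among the available ambulances. -/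
/-!
Let `k ∈ X` attain the minimal rank `p`. All `|X|` ranks of available ambulances lie in
`{p, …, m}`, so `p ≤ m - |X| + 1` and the constraint at `p` is available. For `j ∈ X` of rank
greater than `p`, that constraint reads `y j ≤ 1 - 1 + 0`: the first sum contains the term of `k`,
and every term of the second vanishes because the rank of `j` is not below `p`.
-/

/-- if nonnegative dispatch variables `y` satisfy the
priority-list linking constraints for permutation `σ` (rank of `j` is
`(σ j : ℕ) + 1`), nonempty available set `X`, and `P = m - |X| + 1`, then
`y j = 0` for every `j ∈ X` whose rank exceeds the minimal rank over `X`. -/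
theorem priority_list_constraints_eliminate_nonpreferred (m : ℕ)
    (σ : Equiv.Perm (Fin m)) (X : Finset (Fin m)) (hX : X.Nonempty)
    (y : Fin m → ℝ) (hy : ∀ j ∈ X, 0 ≤ y j)
    (hcons : ∀ j ∈ X, ∀ p ∈ Finset.Icc 1 (m - X.card + 1),
      y j ≤ 1 - (∑ j' ∈ X.erase j, if (σ j' : ℕ) + 1 = p then (1 : ℝ) else 0)
            + ∑ p' ∈ Finset.Ico 1 p, if (σ j : ℕ) + 1 = p' then (1 : ℝ) else 0) :
    ∀ j ∈ X, (X.inf' hX fun j' => (σ j' : ℕ) + 1) < (σ j : ℕ) + 1 → y j = 0 := by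
  intro j hj hlt
  obtain ⟨k, hk, hmin⟩ := X.exists_mem_eq_inf' hX fun j' => (σ j' : ℕ) + 1
  have hle : ∀ i ∈ X, (σ k : ℕ) ≤ σ i := fun i hi => by
    have := X.inf'_le (fun j' => (σ j' : ℕ) + 1) hi
    rw [hmin] at this
    simpa using this
  rw [hmin] at hlt
  have hcard : X.card ≤ m - (σ k : ℕ) := by
    rw [← Nat.card_Ico]
    refine Finset.card_le_card_of_injOn (fun i => (σ i : ℕ)) (fun i hi => ?_) (fun a _ b _ hab => ?_)
    · simpa using hle i hi
    · exact σ.injective (Fin.ext hab)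
  have hkm := (σ k).isLt
  have hc := hcons j hj ((σ k : ℕ) + 1) (Finset.mem_Icc.2 ⟨by omega, by omega⟩)
  have hkj : k ≠ j := by
    rintro rfl
    exact lt_irrefl _ hlt
  have hfirst : (1 : ℝ) ≤
      ∑ j' ∈ X.erase j, if (σ j' : ℕ) + 1 = (σ k : ℕ) + 1 then (1 : ℝ) else 0 := by
    have := Finset.single_le_sum
      (f := fun j' => if (σ j' : ℕ) + 1 = (σ k : ℕ) + 1 then (1 : ℝ) else 0)
      (fun i _ => by split_ifs <;> norm_num) (Finset.mem_erase.2 ⟨hkj, hk⟩)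
    simpa only [if_true] using this
  have hsecond : (∑ p' ∈ Finset.Ico 1 ((σ k : ℕ) + 1),
      if (σ j : ℕ) + 1 = p' then (1 : ℝ) else 0) = 0 := by
    refine Finset.sum_eq_zero fun p' hp' => if_neg ?_
    have := (Finset.mem_Ico.1 hp').2
    omega
  have := hy j hj
  linarith
end

section
/- Let σ be a permutation of {1,…,m}, let X ⊆ {1,…,m} be nonempty, let j* ∈ X attain min_{j ∈ X} σ(j), and let y : X → ℝ satisfy 0 ≤ y(j) ≤ 1 for all j ∈ X. Then y satisfies the priority-list constraints if and only if y(j) = 0 for every j ∈ X with j ≠ j*. Thus the mixed integer programming linking constraints exactly enforce dispatch according to the priority list: the only action permitted a positive value is the most preferred available ambulance. -/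
/-!
By injectivity of `σ`, both sums in a constraint are `0`/`1` indicators: the first says that some
available ambulance other than `j` has rank `p`, the second that `j` has rank below `p`.
The right-hand side is therefore never negative, and it vanishes exactly when another available
ambulance has rank `p` and `j` does not have rank below `p`.

If the constraints hold and `j ≠ j*`, the constraint at the rank of `j*` forces `y j ≤ 0`. This
rank lies in `{1, …, P}` because all `|X|` available ambulances have distinct ranks between it
and `m`. Conversely, zero values satisfy every constraint, and for `j*` any `p` occupied by another
available ambulance exceeds the rank of `j*`, so the right-hand side is at least `1`.
-/

lemma sum_rank_indicator {m : ℕ} (σ : Equiv.Perm (Fin m)) (s : Finset (Fin m)) (p : ℕ) :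
    (∑ j ∈ s, if (σ j : ℕ) + 1 = p then (1 : ℝ) else 0)
      = if ∃ j ∈ s, (σ j : ℕ) + 1 = p then 1 else 0 := by
  split_ifs with h
  · obtain ⟨k, hk, rfl⟩ := h
    rw [Finset.sum_eq_single_of_mem k hk, if_pos rfl]
    intro b _ hb
    refine if_neg fun hbk => hb (σ.injective (Fin.ext ?_))
    omega
  · push Not at h
    exact Finset.sum_eq_zero fun j hj => if_neg (h j hj)

/-- The `|X|` distinct ranks of `X` all lie in an interval starting at the minimal one, so the
minimal rank cannot be too large. -/
lemma min_rank_add_card_le {m : ℕ} (σ : Equiv.Perm (Fin m)) (X : Finset (Fin m))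
    (jstar : Fin m) (hmin : ∀ j ∈ X, (σ jstar : ℕ) ≤ (σ j : ℕ)) :
    (σ jstar : ℕ) + X.card ≤ m := by
  have hcard : X.card ≤ (Finset.Ico (σ jstar : ℕ) m).card := by
    refine Finset.card_le_card_of_injOn (fun j => (σ j : ℕ)) ?_ ?_
    · intro j hj
      exact Finset.mem_coe.2 (Finset.mem_Ico.2 ⟨hmin j hj, (σ j).isLt⟩)
    · intro a _ b _ hab
      exact σ.injective (Fin.ext hab)
  rw [Nat.card_Ico] at hcard
  have := (σ jstar).isLt
  omega

/-- for `y` with `0 ≤ y j ≤ 1` on a nonempty available set `X`,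
and `j*` attaining the minimal priority rank over `X`, `y` satisfies the
priority-list linking constraints (for `p = 1,…,P` with `P = m - |X| + 1`)
if and only if `y j = 0` for every `j ∈ X` with `j ≠ j*`. -/
theorem priority_list_constraints_iff_only_most_preferred (m : ℕ)
    (σ : Equiv.Perm (Fin m)) (X : Finset (Fin m)) (hX : X.Nonempty)
    (jstar : Fin m) (hjstar : jstar ∈ X)
    (hmin : ∀ j ∈ X, (σ jstar : ℕ) ≤ (σ j : ℕ))
    (y : Fin m → ℝ) (hy : ∀ j ∈ X, 0 ≤ y j ∧ y j ≤ 1) :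
    (∀ j ∈ X, ∀ p ∈ Finset.Icc 1 (m - X.card + 1),
      y j ≤ 1 - (∑ j' ∈ X.erase j, if (σ j' : ℕ) + 1 = p then (1 : ℝ) else 0)
            + ∑ p' ∈ Finset.Ico 1 p, if (σ j : ℕ) + 1 = p' then (1 : ℝ) else 0)
    ↔ (∀ j ∈ X, j ≠ jstar → y j = 0) := by
  simp only [sum_rank_indicator, Finset.sum_ite_eq]
  constructor
  · intro h j hj hne
    have hle := min_rank_add_card_le σ X jstar hmin
    have hc := h j hj ((σ jstar : ℕ) + 1) (Finset.mem_Icc.2 ⟨by omega, by omega⟩)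
    have hj_min := hmin j hj
    rw [if_pos ⟨jstar, Finset.mem_erase.2 ⟨hne.symm, hjstar⟩, rfl⟩,
      if_neg (by rw [Finset.mem_Ico]; omega)] at hc
    linarith [(hy j hj).1]
  · intro h j hj p _
    by_cases hne : j = jstar
    · subst hne
      have hy1 := (hy j hj).2
      by_cases hex : ∃ k ∈ X.erase j, (σ k : ℕ) + 1 = p
      · obtain ⟨k, hk, rfl⟩ := id hex
        obtain ⟨hkj, hkX⟩ := Finset.mem_erase.1 hk
        have hk_min := hmin k hkX
        have hk_ne : (σ j : ℕ) ≠ σ k := fun he => hkj (σ.injective (Fin.ext he)).symm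
        rw [if_pos hex, if_pos (Finset.mem_Ico.2 ⟨by omega, by omega⟩)]
        linarith
      · rw [if_neg hex]
        split_ifs <;> linarith
    · rw [h j hj hne]
      split_ifs <;> norm_num
end

section
/- Let σ be a permutation of {1,…,m} and let s and s' be two states whose available ambulance sets coincide, X(s) = X(s') = X ⊆ {1,…,m}, X nonempty. Suppose y_s : X → [0,1] and y_{s'} : X → [0,1] each satisfy the priority-list constraints for (σ, X) and each sums to 1 over X (i.e., an ambulance is dispatched with probability 1 in each state). Then y_s = y_{s'}, and both assign value 1 to the unique j* ∈ X attaining min_{j ∈ X} σ(j). That is, the priority-list constraints harmonize decisions across distinct Markov states: any two states with the same set of available ambulances dispatch the same ambulance. -/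
/-!
Let `j*` be the available ambulance of least rank. The available ranks are `|X|` distinct values in
`{σ j*, …, m}`, so `σ j* ≤ m - |X| + 1` and the constraint at `p = σ j*` is part of the family. For
`j ≠ j*` in `X` it reads `y j ≤ 1 - 1 + 0`, because `j*` has rank `p` and `j` is not ranked before
`p`. With nonnegativity `y` vanishes off `j*`, and since it sums to `1` it is the indicator of `j*`
(`dispatch_of_min`). The right-hand side depends on `σ` and `X` only, so any two states agree.
-/

/-- The pigeonhole bound on the least available rank (ranks are zero-based here). -/
lemma min_rank_le {m : ℕ} (σ : Equiv.Perm (Fin m)) (X : Finset (Fin m)) (k : Fin m)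
    (hmin : ∀ j ∈ X, (σ k : ℕ) ≤ (σ j : ℕ)) : (σ k : ℕ) ≤ m - X.card := by
  have h : X.card ≤ (Finset.Ico (σ k : ℕ) m).card := by
    apply Finset.card_le_card_of_injOn (fun j => (σ j : ℕ))
    · intro j hj
      simpa using hmin j hj
    · intro a _ b _ hab
      exact σ.injective (Fin.ext hab)
  have hk := (σ k).isLt
  rw [Nat.card_Ico] at h
  omega

/-- A feasible dispatch vector is the indicator of the least-ranked available ambulance. -/
lemma dispatch_of_min {m : ℕ} (σ : Equiv.Perm (Fin m)) (X : Finset (Fin m)) (y : Fin m → ℝ)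
    (h0 : ∀ j ∈ X, 0 ≤ y j)
    (hcons : ∀ j ∈ X, ∀ p ∈ Finset.Icc 1 (m - X.card + 1),
      y j ≤ 1 - (∑ j' ∈ X.erase j, if (σ j' : ℕ) + 1 = p then (1 : ℝ) else 0)
            + ∑ p' ∈ Finset.Ico 1 p, if (σ j : ℕ) + 1 = p' then (1 : ℝ) else 0)
    (hsum : ∑ j ∈ X, y j = 1) (k : Fin m) (hk : k ∈ X)
    (hmin : ∀ j ∈ X, (σ k : ℕ) ≤ (σ j : ℕ)) :
    ∀ j ∈ X, y j = if j = k then 1 else 0 := by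
  have hoff : ∀ j ∈ X, j ≠ k → y j = 0 := by
    intro j hj hjk
    have hc := hcons j hj ((σ k : ℕ) + 1)
      (Finset.mem_Icc.2 ⟨by omega, by have := min_rank_le σ X k hmin; omega⟩)
    have h1 : (1 : ℝ) ≤
        ∑ j' ∈ X.erase j, if (σ j' : ℕ) + 1 = (σ k : ℕ) + 1 then (1 : ℝ) else 0 := by
      have := Finset.single_le_sum
        (f := fun j' => if (σ j' : ℕ) + 1 = (σ k : ℕ) + 1 then (1 : ℝ) else 0)
        (fun i _ => by positivity) (Finset.mem_erase.2 ⟨hjk.symm, hk⟩)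
      simpa using this
    have h2 : (∑ p' ∈ Finset.Ico 1 ((σ k : ℕ) + 1),
        if (σ j : ℕ) + 1 = p' then (1 : ℝ) else 0) = 0 := by
      apply Finset.sum_eq_zero
      intro p' hp'
      have hlt := (Finset.mem_Ico.1 hp').2
      have := hmin j hj
      exact if_neg (by omega)
    linarith [h0 j hj]
  have hone : y k = 1 := by
    rw [← hsum, Finset.sum_eq_single_of_mem k hk hoff]
  intro j hj
  split_ifs with h
  · rw [h, hone]
  · exact hoff j hj h

/-- if two states have the same nonempty available set `X`, and
the dispatch variables `ys` and `ys'` in each state take values in `[0,1]`,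
satisfy the priority-list linking constraints for `(σ, X)`, and each sum to 1
over `X`, then `ys` and `ys'` agree on `X` and both assign value `1` to the
unique `j* ∈ X` attaining the minimal priority rank over `X`. -/
theorem priority_list_harmonizes_states (m : ℕ)
    (σ : Equiv.Perm (Fin m)) (X : Finset (Fin m)) (hX : X.Nonempty)
    (ys ys' : Fin m → ℝ)
    (hys01 : ∀ j ∈ X, 0 ≤ ys j ∧ ys j ≤ 1)
    (hys'01 : ∀ j ∈ X, 0 ≤ ys' j ∧ ys' j ≤ 1)
    (hcons : ∀ j ∈ X, ∀ p ∈ Finset.Icc 1 (m - X.card + 1),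
      ys j ≤ 1 - (∑ j' ∈ X.erase j, if (σ j' : ℕ) + 1 = p then (1 : ℝ) else 0)
            + ∑ p' ∈ Finset.Ico 1 p, if (σ j : ℕ) + 1 = p' then (1 : ℝ) else 0)
    (hcons' : ∀ j ∈ X, ∀ p ∈ Finset.Icc 1 (m - X.card + 1),
      ys' j ≤ 1 - (∑ j' ∈ X.erase j, if (σ j' : ℕ) + 1 = p then (1 : ℝ) else 0)
            + ∑ p' ∈ Finset.Ico 1 p, if (σ j : ℕ) + 1 = p' then (1 : ℝ) else 0)
    (hsum : ∑ j ∈ X, ys j = 1) (hsum' : ∑ j ∈ X, ys' j = 1) :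
    (∀ j ∈ X, ys j = ys' j) ∧
    (∀ jstar ∈ X, (∀ j ∈ X, (σ jstar : ℕ) ≤ (σ j : ℕ)) →
      ys jstar = 1 ∧ ys' jstar = 1) := by
  have hs := dispatch_of_min σ X ys (fun j hj => (hys01 j hj).1) hcons hsum
  have hs' := dispatch_of_min σ X ys' (fun j hj => (hys'01 j hj).1) hcons' hsum'
  constructor
  · obtain ⟨k, hk, hmin⟩ := X.exists_min_image (fun j => (σ j : ℕ)) hX
    intro j hj
    rw [hs k hk hmin j hj, hs' k hk hmin j hj]
  · intro k hk hmin
    simp [hs k hk hmin k hk, hs' k hk hmin k hk]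
end

section
/- Consider the idling extension with m + 1 actions {0,1,…,m}, where action 0 (idling) is available in every state, and let σ be a permutation of the m + 1 priority ranks {1,…,m+1} over the actions {0,1,…,m}. Let X ⊆ {0,1,…,m} be any available set with 0 ∈ X, let P = (m+1) − |X| + 1, and let y : X → ℝ be nonnegative and satisfy the priority-list constraints for (σ, X, P). Then y(j) = 0 for every ambulance j ∈ X with σ(j) > σ(0). That is, ambulances that appear in the priority list after the idling action are never dispatched in any state. -/
/-! Let `k` be the most preferred action of `X`. Its rank is at most `P`, because all `|X|` ranks of
available actions are at least that of `k`. An action `j ∈ X` ranked after idling is ranked after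
`k`, so in the constraint for `j` at the rank `p` of `k` the first sum is at least `1` (the term of
`k`) and the second is `0`; hence `y j ≤ 0`. The constraint at the rank of idling itself would not
do, as that rank may exceed `P`. -/

/-- idling extension: with `m + 1` actions `{0,1,…,m}` where
action `0` is idling and is available (`0 ∈ X`), a permutation `σ` of the
`m + 1` priority ranks, `P = (m+1) - |X| + 1`, and nonnegative `y` satisfying
the priority-list linking constraints, every action `j ∈ X` ranked after the
idling action (`σ j > σ 0`) is never dispatched: `y j = 0`. -/
theorem actions_after_idling_never_dispatched (m : ℕ)
    (σ : Equiv.Perm (Fin (m + 1))) (X : Finset (Fin (m + 1)))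
    (h0 : (0 : Fin (m + 1)) ∈ X)
    (y : Fin (m + 1) → ℝ) (hy : ∀ j ∈ X, 0 ≤ y j)
    (hcons : ∀ j ∈ X, ∀ p ∈ Finset.Icc 1 ((m + 1) - X.card + 1),
      y j ≤ 1 - (∑ j' ∈ X.erase j, if (σ j' : ℕ) + 1 = p then (1 : ℝ) else 0)
            + ∑ p' ∈ Finset.Ico 1 p, if (σ j : ℕ) + 1 = p' then (1 : ℝ) else 0) :
    ∀ j ∈ X, (σ (0 : Fin (m + 1)) : ℕ) < (σ j : ℕ) → y j = 0 := by
  intro j hj hlt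
  obtain ⟨k, hk, hmin⟩ := X.exists_min_image (fun i => (σ i : ℕ)) ⟨0, h0⟩
  have hkj : (σ k : ℕ) < σ j := (hmin 0 h0).trans_lt hlt
  have hne : k ≠ j := by
    rintro rfl
    exact lt_irrefl _ hkj
  -- The ranks of `X` are distinct and lie in `[σ k, m + 1)`, so the rank of `k` is at most `P`.
  have hcard : X.card ≤ (m + 1) - (σ k : ℕ) := by
    have h := Finset.card_le_card_of_injOn (s := X) (t := Finset.Ico (σ k : ℕ) (m + 1))
      (fun i => (σ i : ℕ))
      (fun i hi => Finset.mem_coe.2 (Finset.mem_Ico.2 ⟨hmin i hi, (σ i).isLt⟩))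
      (fun a _ b _ hab => σ.injective (Fin.ext hab))
    simpa using h
  have hp : (σ k : ℕ) + 1 ∈ Finset.Icc 1 ((m + 1) - X.card + 1) := by
    have := (σ k).isLt
    rw [Finset.mem_Icc]
    omega
  have hc := hcons j hj _ hp
  have h1 : (1 : ℝ) ≤ ∑ j' ∈ X.erase j,
      if (σ j' : ℕ) + 1 = (σ k : ℕ) + 1 then (1 : ℝ) else 0 := by
    have h := Finset.single_le_sum
      (f := fun j' => if (σ j' : ℕ) + 1 = (σ k : ℕ) + 1 then (1 : ℝ) else 0)
      (fun i _ => by split_ifs <;> norm_num)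
      (Finset.mem_erase.2 ⟨hne, hk⟩)
    simpa using h
  have h2 : (∑ p' ∈ Finset.Ico 1 ((σ k : ℕ) + 1),
      if (σ j : ℕ) + 1 = p' then (1 : ℝ) else 0) = 0 := by
    refine Finset.sum_eq_zero fun p' hp' => if_neg ?_
    rw [Finset.mem_Ico] at hp'
    omega
  linarith [hy j hj]
end

section
/- Let z : {1,…,m} × {1,…,m} → {0,1} satisfy Σ_{p=1}^{m} z(j,p) = 1 for every j and Σ_{j=1}^{m} z(j,p) = 1 for every p. Let X ⊆ {1,…,m} be nonempty with P = m − |X| + 1, and let y : X → ℝ be nonnegative and satisfy, for every j ∈ X and every p ∈ {1,…,P}, y(j) ≤ 1 − Σ_{j' ∈ X, j' ≠ j} z(j',p) + Σ_{p'=1}^{p−1} z(j,p'). Define the priority of ambulance j as the unique p with z(j,p) = 1. Then y(j) = 0 for every j ∈ X whose priority is not the smallest priority among ambulances in X. That is, constraints (5)–(8) of Model PL, stated directly in terms of the binary design variables z, permit a positive dispatch variable only for the most preferred available ambulance. -/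
/-!
The matrix `z` is a permutation matrix, so each ambulance `j` has a unique priority `π j`, and
`π` is injective. Let `j₀ ∈ X` minimise `π` over `X`. Since `π` maps `X` injectively into the
positions at or after `π j₀`, that position is among the first `m - |X| + 1`, so the linking
constraint at `π j₀` is available. For any other `j ∈ X` it reads `y j ≤ 1 - 1 + 0`: the first sum
contains `z j₀ (π j₀) = 1`, and `j` occupies no position before `π j₀`.
-/

/-- In a family of naturals with sum `1`, the value `1` is taken at most once. -/
lemma eq_of_sum_eq_one {ι : Type*} [Fintype ι] (f : ι → ℕ)
    (hf : ∑ i, f i = 1) {a b : ι} (ha : f a = 1) (hb : f b = 1) : a = b := by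
  classical
  by_contra hab
  have h : ∑ i ∈ ({a, b} : Finset ι), f i ≤ ∑ i, f i :=
    Finset.sum_le_sum_of_subset (Finset.subset_univ _)
  rw [Finset.sum_pair hab] at h
  omega

/-- with binary design variables `z` satisfying the assignment
constraints, a nonempty available set `X` with `P = m - |X| + 1`, and
nonnegative `y` satisfying the linking constraints stated directly in terms
of `z`, only the available ambulance with the smallest priority may have a
positive dispatch variable: if `j ∈ X` has priority `p` (`z j p = 1`) and some
other available ambulance has a strictly smaller priority, then `y j = 0`. -/
theorem model_PL_constraints_eliminate_nonpreferred (m : ℕ)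
    (z : Fin m → Fin m → ℕ) (hbin : ∀ j p, z j p = 0 ∨ z j p = 1)
    (hrow : ∀ j, ∑ p, z j p = 1) (hcol : ∀ p, ∑ j, z j p = 1)
    (X : Finset (Fin m)) (hX : X.Nonempty)
    (y : Fin m → ℝ) (hy : ∀ j ∈ X, 0 ≤ y j)
    (hcons : ∀ j ∈ X, ∀ p : Fin m, (p : ℕ) + 1 ≤ m - X.card + 1 →
      y j ≤ 1 - (∑ j' ∈ X.erase j, (z j' p : ℝ))
            + ∑ p' ∈ Finset.univ.filter (fun p' : Fin m => p' < p), (z j p' : ℝ)) :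
    ∀ j ∈ X, ∀ p : Fin m, z j p = 1 →
      (∃ j' ∈ X, ∃ q : Fin m, z j' q = 1 ∧ q < p) → y j = 0 := by
  have hex : ∀ j, ∃ p, z j p = 1 := by
    intro j
    by_contra! hne
    have h0 : ∑ p, z j p = 0 :=
      Finset.sum_eq_zero fun p _ => (hbin j p).resolve_right (hne p)
    have := hrow j
    omega
  choose π hπ using hex
  have hπ_unique : ∀ {j p}, z j p = 1 → p = π j := fun {j p} h =>
    eq_of_sum_eq_one (z j) (hrow j) h (hπ j)
  have hπ_inj : Function.Injective π := fun a b hab =>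
    eq_of_sum_eq_one (fun j => z j (π b)) (hcol (π b)) (hab ▸ hπ a) (hπ b)
  obtain ⟨j₀, hj₀, hmin⟩ := Finset.exists_min_image X π hX
  have hcard : X.card ≤ m - (π j₀ : ℕ) := by
    have h := Finset.card_le_card_of_injOn (t := Finset.Ici (π j₀)) π
      (fun j hj => by simpa using hmin j hj) hπ_inj.injOn
    rwa [Fin.card_Ici] at h
  rintro j hj p hp ⟨j', hj', q, hq, hqp⟩
  have hne : j₀ ≠ j := by
    rintro rfl
    rw [hπ_unique hp, hπ_unique hq] at hqp
    exact absurd (hmin j' hj') (not_le.mpr hqp)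
  have hle := hcons j hj (π j₀) (by have := (π j₀).isLt; omega)
  have hother : (1 : ℝ) ≤ ∑ j' ∈ X.erase j, (z j' (π j₀) : ℝ) := by
    have h := Finset.single_le_sum (f := fun j' => (z j' (π j₀) : ℝ))
      (fun i _ => Nat.cast_nonneg _) (Finset.mem_erase.mpr ⟨hne, hj₀⟩)
    simpa [hπ j₀] using h
  have hbefore :
      ∑ p' ∈ Finset.univ.filter (fun p' : Fin m => p' < π j₀), (z j p' : ℝ) = 0 := by
    refine Finset.sum_eq_zero fun p' hp' => ?_
    have hlt : p' < π j₀ := (Finset.mem_filter.mp hp').2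
    rcases hbin j p' with h | h
    · simp [h]
    · rw [hπ_unique h] at hlt
      exact absurd (hmin j hj) (not_le.mpr hlt)
  have := hy j hj
  linarith
end
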